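/- arXiv:2404.16615 — 2 statements merged into one kernel-verified Lean document; each statement's English description precedes it below -/
import Mathlib

section
/- (Existence and monotonicity for the discretised minimisation programs.) Under Assumption (A), fix finite nonnegative Borel measures μ_1, μ_2, … on [2b(0),∞), let U_n (n ∈ ℕ) be the cone of measures Σ_{i=1}^n a_i μ_i with a_i ≥ 0, and let U_∞ be the closure of ∪_n U_n in the vague topology. For n ∈ ℕ ∪ {∞} let p_{2,n} := inf{ ∫ g dμ : μ ∈ U_n and r_μ(t,b(t)) ≥ 1 for all t ∈ (0,t0] }. Assume there exists C > 0 such that C·μ_1 satisfies r_{C·μ_1}(t,b(t)) ≥ 1 for all t ∈ (0,t0]. Then for every n ∈ ℕ ∪ {∞} the infimum p_{2,n} is attained by some feasible μ*_{2,n} ∈ U_n, and p_{2,n} ≤ C·∫ g dμ_1; moreover, for m ≤ n the measure μ*_{2,m} is feasible for the n-th program and p_{2,m} ≥ p_{2,n}. -/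
open MeasureTheory Set Filter
open scoped ENNReal NNReal Topology

noncomputable def rTheta (θ t x : ℝ) : ℝ := Real.exp (-θ ^ 2 / (2 * t) + θ * x / t)

noncomputable def rMu (μ : Measure ℝ) (t x : ℝ) : ℝ≥0∞ :=
  ∫⁻ θ, ENNReal.ofReal (rTheta θ t x) ∂μ

/-- The positive cone `U_n` generated by the measures `μ_1 = μs 0, …, μ_n = μs (n-1)`. -/
def coneU (μs : ℕ → Measure ℝ) (n : ℕ) : Set (Measure ℝ) :=
  {μ | ∃ a : ℕ → ℝ≥0, μ = ∑ i ∈ Finset.range n, a i • μs i}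

/-- The vague topology on measures on `ℝ`: the coarsest topology making
`μ ↦ ∫ f dμ` continuous for every continuous compactly supported `f`. -/
noncomputable def vagueTop : TopologicalSpace (Measure ℝ) :=
  ⨅ (f : ℝ → ℝ) (_ : Continuous f) (_ : HasCompactSupport f),
    TopologicalSpace.induced (fun μ : Measure ℝ => ∫ x, f x ∂μ) inferInstance

/-- `U_∞`: the vague closure of `⋃ n, U_n`. -/
noncomputable def coneUInf (μs : ℕ → Measure ℝ) : Set (Measure ℝ) :=
  @closure _ vagueTop (⋃ n, coneU μs n)

/-- Feasible measures of the minimisation program restricted to `U`. -/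
def feasSet (b : ℝ → ℝ) (t0 : ℝ) (U : Set (Measure ℝ)) : Set (Measure ℝ) :=
  {μ ∈ U | ∀ t ∈ Set.Ioc 0 t0, 1 ≤ rMu μ t (b t)}

/-- The objective `∫ g dμ` with `g θ = r_θ(t0, x0)`. -/
noncomputable def gInt (t0 x0 : ℝ) (μ : Measure ℝ) : ℝ≥0∞ :=
  ∫⁻ θ, ENNReal.ofReal (rTheta θ t0 x0) ∂μ

/-- The optimal value `p_{2,·}` of the minimisation program restricted to `U`. -/
noncomputable def pVal (b : ℝ → ℝ) (t0 x0 : ℝ) (U : Set (Measure ℝ)) : ℝ≥0∞ :=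
  ⨅ μ ∈ feasSet b t0 U, gInt t0 x0 μ


lemma aux_cont (t x : ℝ) : Continuous (fun θ => rTheta θ t x) := by
  unfold rTheta; fun_prop

lemma aux_pos (θ t x : ℝ) : 0 < rTheta θ t x := Real.exp_pos _

lemma aux_le (θ t x : ℝ) (ht : 0 < t) : rTheta θ t x ≤ Real.exp (x ^ 2 / (2 * t)) := by
  unfold rTheta
  apply Real.exp_le_exp.2
  have : x ^ 2 / (2 * t) - (-θ ^ 2 / (2 * t) + θ * x / t) = (x - θ) ^ 2 / (2 * t) := by
    field_simp; ring
  have h2 : 0 ≤ (x - θ) ^ 2 / (2 * t) := by positivity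
  linarith

lemma aux_fin (μ : Measure ℝ) [IsFiniteMeasure μ] (t x : ℝ) (ht : 0 < t) : rMu μ t x ≠ ⊤ := by
  unfold rMu
  have : ∫⁻ θ, ENNReal.ofReal (rTheta θ t x) ∂μ
      ≤ ∫⁻ _, ENNReal.ofReal (Real.exp (x ^ 2 / (2 * t))) ∂μ :=
    lintegral_mono fun θ => ENNReal.ofReal_le_ofReal (aux_le θ t x ht)
  refine ne_top_of_le_ne_top ?_ this
  rw [lintegral_const]
  exact ENNReal.mul_ne_top ENNReal.ofReal_ne_top (measure_ne_top _ _)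

lemma aux_sum (μs : ℕ → Measure ℝ) (a : ℕ → ℝ≥0) (n : ℕ) (t x : ℝ) :
    rMu (∑ i ∈ Finset.range n, a i • μs i) t x
      = ∑ i ∈ Finset.range n, (a i : ℝ≥0∞) * rMu (μs i) t x := by
  unfold rMu
  rw [lintegral_finsetSum_measure]
  refine Finset.sum_congr rfl fun i _ => ?_
  rw [lintegral_smul_measure]; rfl

lemma aux_zero (μ : Measure ℝ) (t x : ℝ) (h : rMu μ t x = 0) : μ = 0 := by
  unfold rMu at h
  rw [lintegral_eq_zero_iff ((aux_cont t x).measurable.ennreal_ofReal)] at h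
  rw [← ae_eq_bot, ← eventually_false_iff_eq_bot]
  filter_upwards [h] with θ hθ
  simp at hθ
  exact absurd (aux_pos θ t x) (not_lt.2 hθ)

lemma aux_mono (μs : ℕ → Measure ℝ) {m n : ℕ} (h : m ≤ n) : coneU μs m ⊆ coneU μs n := by
  rintro μ ⟨a, rfl⟩
  refine ⟨fun i => if i < m then a i else 0, ?_⟩
  rw [← Finset.sum_subset (Finset.range_mono h)]
  · refine Finset.sum_congr rfl fun i hi => ?_
    simp [Finset.mem_range.1 hi]
  · intro i _ hi
    simp at hi
    simp [not_lt.2 hi]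

lemma aux_mem (μs : ℕ → Measure ℝ) (C : ℝ≥0) {n : ℕ} (h : 1 ≤ n) : C • μs 0 ∈ coneU μs n :=
  aux_mono μs h ⟨fun _ => C, by simp⟩

/-- Minimising sequence. -/
lemma aux_seq (b : ℝ → ℝ) (t0 x0 : ℝ) (U : Set (Measure ℝ)) (hp : pVal b t0 x0 U ≠ ⊤) :
    ∃ μ : ℕ → Measure ℝ, (∀ k, μ k ∈ feasSet b t0 U) ∧
      (∀ k, gInt t0 x0 (μ k) ≤ pVal b t0 x0 U + 1) ∧
      Tendsto (fun k => gInt t0 x0 (μ k)) atTop (𝓝 (pVal b t0 x0 U)) := by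
  have : ∀ k : ℕ, ∃ μ ∈ feasSet b t0 U, gInt t0 x0 μ < pVal b t0 x0 U + ((k + 1 : ℕ) : ℝ≥0∞)⁻¹ := by
    intro k
    have h := ENNReal.lt_add_right hp
      (ENNReal.inv_ne_zero.2 (ENNReal.natCast_ne_top (k + 1)))
    conv_lhs at h => unfold pVal
    simpa [iInf_lt_iff] using h
  choose μ h1 h2 using this
  refine ⟨μ, h1, fun k => (h2 k).le.trans ?_, ?_⟩
  · gcongr
    rw [ENNReal.inv_le_one]
    exact_mod_cast Nat.le_add_left 1 k
  · refine tendsto_of_tendsto_of_tendsto_of_le_of_le tendsto_const_nhds ?_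
      (fun k => iInf₂_le _ (h1 k)) (fun k => (h2 k).le)
    have := (ENNReal.tendsto_inv_nat_nhds_zero.comp (tendsto_add_atTop_nat 1)).const_add
      (pVal b t0 x0 U)
    simpa using this

open Classical in
lemma aux_finite (b : ℝ → ℝ) (t0 x0 : ℝ) (ht0 : 0 < t0)
    (μs : ℕ → Measure ℝ) (hfin : ∀ i, IsFiniteMeasure (μs i)) (n : ℕ)
    (hp : pVal b t0 x0 (coneU μs n) ≠ ⊤) :
    ∃ μstar ∈ feasSet b t0 (coneU μs n), gInt t0 x0 μstar = pVal b t0 x0 (coneU μs n) := by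
  obtain ⟨μ, h1, h2, h3⟩ := aux_seq b t0 x0 _ hp
  choose a ha using fun k => (h1 k).1
  -- normalise the coefficients of zero measures
  let a' : ℕ → ℕ → ℝ≥0 := fun k i => if μs i = 0 then 0 else a k i
  have ha' : ∀ k, μ k = ∑ i ∈ Finset.range n, a' k i • μs i := by
    intro k
    rw [ha k]
    refine Finset.sum_congr rfl fun i _ => ?_
    by_cases h : μs i = 0 <;> simp [a', h]
  have hbd : ∀ i ∈ Finset.range n, ∃ B : ℝ≥0, ∀ k, a' k i ≤ B := by
    intro i hi
    by_cases h : μs i = 0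
    · exact ⟨0, fun k => by simp [a', h]⟩
    · have hne : gInt t0 x0 (μs i) ≠ 0 := fun h0 => h (aux_zero _ t0 x0 h0)
      have hnt : gInt t0 x0 (μs i) ≠ ⊤ := aux_fin (μs i) t0 x0 ht0
      have hB : (pVal b t0 x0 (coneU μs n) + 1) / gInt t0 x0 (μs i) ≠ ⊤ :=
        ENNReal.div_ne_top (by simp [hp]) hne
      refine ⟨((pVal b t0 x0 (coneU μs n) + 1) / gInt t0 x0 (μs i)).toNNReal, fun k => ?_⟩
      rw [← ENNReal.coe_le_coe, ENNReal.coe_toNNReal hB,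
        ENNReal.le_div_iff_mul_le (Or.inl hne) (Or.inl hnt)]
      refine le_trans ?_ (h2 k)
      have := aux_sum μs (a' k) n t0 x0
      rw [← ha' k] at this
      change _ ≤ rMu (μ k) t0 x0
      rw [this]
      exact Finset.single_le_sum (f := fun i => (a' k i : ℝ≥0∞) * rMu (μs i) t0 x0)
        (fun _ _ => zero_le) hi
  have hlim : ∀ i ∈ Finset.range n, ∃ c : ℝ≥0,
      Tendsto (fun k => a' k i) (hyperfilter ℕ : Filter ℕ) (𝓝 c) := by
    intro i hi
    obtain ⟨B, hB⟩ := hbd i hi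
    obtain ⟨c, -, hc⟩ := (isCompact_Icc (a := (0 : ℝ≥0)) (b := B)).ultrafilter_le_nhds
      ((hyperfilter ℕ).map fun k => a' k i)
      (by
        rw [le_principal_iff]
        exact Filter.mem_map.2 (Filter.univ_mem' fun k => ⟨zero_le, hB k⟩))
    exact ⟨c, hc⟩
  choose! c hc using hlim
  have htend : ∀ t x, 0 < t → Tendsto (fun k => rMu (μ k) t x) (hyperfilter ℕ : Filter ℕ)
      (𝓝 (rMu (∑ i ∈ Finset.range n, c i • μs i) t x)) := by
    intro t x ht
    rw [aux_sum]
    simp_rw [ha', aux_sum]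
    refine tendsto_finsetSum _ fun i hi => ?_
    exact ENNReal.Tendsto.mul_const (ENNReal.tendsto_coe.2 (hc i hi))
      (Or.inr (aux_fin (μs i) t x ht))
  refine ⟨_, ⟨⟨c, rfl⟩, fun t ht => ?_⟩, ?_⟩
  · exact ge_of_tendsto' (htend t (b t) ht.1) fun k => (h1 k).2 t ht
  · exact tendsto_nhds_unique (htend t0 x0 ht0)
      (h3.mono_left (Nat.cofinite_eq_atTop ▸ hyperfilter_le_cofinite))


lemma aux_integrable (g : ℝ → ℝ) (hg : Continuous g) (hpos : ∀ x, 0 < g x) (μ : Measure ℝ)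
    (hμ : ∫⁻ x, ENNReal.ofReal (g x) ∂μ ≠ ⊤) : Integrable g μ := by
  refine ⟨hg.aestronglyMeasurable, ?_⟩
  rw [hasFiniteIntegral_iff_ofReal (Eventually.of_forall fun x => (hpos x).le)]
  exact lt_top_iff_ne_top.2 hμ

lemma aux_dom (g : ℝ → ℝ) (hg : Continuous g) (hpos : ∀ x, 0 < g x) (f : ℝ → ℝ)
    (hf : Continuous f) (hc : HasCompactSupport f) : ∃ c, ∀ x, ‖f x‖ ≤ c * g x := by
  have h1 : Continuous fun x => f x / g x := hf.div hg fun x => (hpos x).ne'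
  have h2 : HasCompactSupport fun x => f x / g x := by
    simp_rw [div_eq_mul_inv]; exact hc.mul_right
  obtain ⟨c, hc⟩ := h2.exists_bound_of_continuous h1
  refine ⟨c, fun x => ?_⟩
  have := hc x
  rw [norm_div, Real.norm_of_nonneg (hpos x).le, div_le_iff₀ (hpos x)] at this
  exact this

open CompactlySupported in
lemma aux_compact (g : ℝ → ℝ) (hg : Continuous g) (hpos : ∀ x, 0 < g x) (μ : ℕ → Measure ℝ)
    (M : ℝ) (hμ : ∀ k, Integrable g (μ k)) (hM : ∀ k, ∫ x, g x ∂(μ k) ≤ M) :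
    ∃ ν : Measure ℝ, IsFiniteMeasureOnCompacts ν ∧
      ∀ f : ℝ → ℝ, Continuous f → HasCompactSupport f →
        Tendsto (fun k => ∫ x, f x ∂(μ k)) (hyperfilter ℕ : Filter ℕ) (𝓝 (∫ x, f x ∂ν)) := by
  have hint : ∀ (f : C_c(ℝ, ℝ)) k, Integrable f (μ k) := by
    intro f k
    obtain ⟨c, hc⟩ := aux_dom g hg hpos f f.continuous f.hasCompactSupport
    exact ((hμ k).const_mul c).mono' f.continuous.aestronglyMeasurable (Eventually.of_forall hc)
  have hlim : ∀ f : C_c(ℝ, ℝ), ∃ c : ℝ,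
      Tendsto (fun k => ∫ x, f x ∂(μ k)) (hyperfilter ℕ : Filter ℕ) (𝓝 c) := by
    intro f
    obtain ⟨c, hc⟩ := aux_dom g hg hpos f f.continuous f.hasCompactSupport
    have hc0 : 0 ≤ c := by
      have := (norm_nonneg _).trans (hc 0)
      exact nonneg_of_mul_nonneg_left this (hpos 0)
    have hb : ∀ k, ∫ x, f x ∂(μ k) ∈ Icc (-(c * M)) (c * M) := by
      intro k
      rw [mem_Icc, ← abs_le, ← Real.norm_eq_abs]
      refine (norm_integral_le_of_norm_le ((hμ k).const_mul c) (Eventually.of_forall hc)).trans ?_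
      rw [integral_const_mul]
      exact mul_le_mul_of_nonneg_left (hM k) hc0
    obtain ⟨d, -, hd⟩ := (isCompact_Icc (a := -(c * M)) (b := c * M)).ultrafilter_le_nhds
      ((hyperfilter ℕ).map fun k => ∫ x, f x ∂(μ k))
      (by
        rw [le_principal_iff]
        exact Filter.mem_map.2 (Filter.univ_mem' hb))
    exact ⟨d, hd⟩
  choose L hL using hlim
  let Λ₀ : C_c(ℝ, ℝ) →ₗ[ℝ] ℝ :=
    { toFun := L
      map_add' := fun f h => by
        refine tendsto_nhds_unique (hL (f + h)) (((hL f).add (hL h)).congr fun k => ?_)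
        rw [← integral_add (hint f k) (hint h k)]; rfl
      map_smul' := fun c f => by
        refine tendsto_nhds_unique (hL (c • f)) (((hL f).const_mul c).congr fun k => ?_)
        rw [← integral_const_mul]; rfl }
  let Λ : C_c(ℝ, ℝ) →ₚ[ℝ] ℝ := PositiveLinearMap.mk₀ Λ₀ fun f hf =>
    ge_of_tendsto' (hL f) fun k => integral_nonneg hf
  refine ⟨RealRMK.rieszMeasure Λ, inferInstance, fun f hf hc => ?_⟩
  have := RealRMK.integral_rieszMeasure Λ ⟨⟨f, hf⟩, hc⟩
  have h2 : Λ ⟨⟨f, hf⟩, hc⟩ = L ⟨⟨f, hf⟩, hc⟩ := rfl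
  rw [h2] at this
  have h3 := hL ⟨⟨f, hf⟩, hc⟩
  rw [← this] at h3
  exact h3

lemma aux_vague (F : Filter ℕ) [F.NeBot] (μ : ℕ → Measure ℝ) (ν : Measure ℝ)
    (h : ∀ f : ℝ → ℝ, Continuous f → HasCompactSupport f →
        Tendsto (fun k => ∫ x, f x ∂(μ k)) F (𝓝 (∫ x, f x ∂ν)))
    (S : Set (Measure ℝ)) (hS : ∀ k, μ k ∈ @closure _ vagueTop S) :
    ν ∈ @closure _ vagueTop S := by
  have key : Tendsto μ F (@nhds _ vagueTop ν) := by
    unfold vagueTop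
    simp only [nhds_iInf, nhds_induced, tendsto_iInf, tendsto_comap_iff]
    exact h
  letI : TopologicalSpace (Measure ℝ) := vagueTop
  exact isClosed_closure.mem_of_tendsto key (Eventually.of_forall hS)

noncomputable def chi (N : ℕ) (x : ℝ) : ℝ := max 0 (min 1 (N + 1 - |x|))

lemma chi_cont (N : ℕ) : Continuous (chi N) := by unfold chi; fun_prop

lemma chi_nonneg (N : ℕ) (x : ℝ) : 0 ≤ chi N x := le_max_left _ _

lemma chi_le (N : ℕ) (x : ℝ) : chi N x ≤ 1 := max_le zero_le_one (min_le_left _ _)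

lemma chi_one (N : ℕ) (x : ℝ) (h : |x| ≤ N) : chi N x = 1 := by
  unfold chi
  rw [min_eq_left (by linarith), max_eq_right zero_le_one]

lemma chi_supp (N : ℕ) : HasCompactSupport (chi N) := by
  refine HasCompactSupport.intro (isCompact_Icc (a := -((N : ℝ) + 1)) (b := N + 1)) ?_
  intro x hx
  have : (N : ℝ) + 1 < |x| := by
    by_contra h
    exact hx (abs_le.1 (not_lt.1 h))
  unfold chi
  exact max_eq_left ((min_le_right _ _).trans (by linarith))

lemma chi_mono (x : ℝ) : Monotone fun N => chi N x := by
  intro m n h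
  have : (m : ℝ) ≤ n := by exact_mod_cast h
  unfold chi
  dsimp only
  gcongr

/-- lintegral version of the vague convergence -/
lemma aux_lint (F : Filter ℕ) (g : ℝ → ℝ) (hg : Continuous g) (hpos : ∀ x, 0 < g x)
    (μ : ℕ → Measure ℝ) (hμ : ∀ k, Integrable g (μ k)) (ν : Measure ℝ)
    [IsFiniteMeasureOnCompacts ν]
    (h : ∀ f : ℝ → ℝ, Continuous f → HasCompactSupport f →
        Tendsto (fun k => ∫ x, f x ∂(μ k)) F (𝓝 (∫ x, f x ∂ν)))
    (f : ℝ → ℝ) (hf : Continuous f) (hc : HasCompactSupport f) (h0 : ∀ x, 0 ≤ f x) :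
    Tendsto (fun k => ∫⁻ x, ENNReal.ofReal (f x) ∂(μ k)) F
      (𝓝 (∫⁻ x, ENNReal.ofReal (f x) ∂ν)) := by
  obtain ⟨c, hcd⟩ := aux_dom g hg hpos f hf hc
  have h1 := ENNReal.tendsto_ofReal (h f hf hc)
  rw [ofReal_integral_eq_lintegral_ofReal (hf.integrable_of_hasCompactSupport hc)
    (Eventually.of_forall h0)] at h1
  refine h1.congr fun k => ?_
  exact ofReal_integral_eq_lintegral_ofReal
    (((hμ k).const_mul c).mono' hf.aestronglyMeasurable (Eventually.of_forall hcd))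
    (Eventually.of_forall h0)

lemma aux_tail (t t0 x x0 : ℝ) (ht : 0 < t) (htt : t < t0) (ε : ℝ) (hε : 0 < ε) :
    ∃ N : ℕ, ∀ θ : ℝ, (N : ℝ) ≤ |θ| → rTheta θ t x ≤ ε * rTheta θ t0 x0 := by
  have ht0 : 0 < t0 := ht.trans htt
  set a := (1 / t - 1 / t0) / 2 with ha
  set c := x / t - x0 / t0 with hc
  have hapos : 0 < a := by
    have := one_div_lt_one_div_of_lt ht htt
    rw [ha]; linarith
  obtain ⟨N, hN⟩ := exists_nat_ge (max 1 ((|c| + |Real.log ε|) / a))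
  refine ⟨N, fun θ hθ => ?_⟩
  have h1 : 1 ≤ |θ| := (le_max_left _ _).trans (hN.trans hθ)
  have h2 : (|c| + |Real.log ε|) / a ≤ |θ| := (le_max_right _ _).trans (hN.trans hθ)
  rw [div_le_iff₀ hapos] at h2
  unfold rTheta
  rw [show ε * Real.exp (-θ ^ 2 / (2 * t0) + θ * x0 / t0)
    = Real.exp (Real.log ε + (-θ ^ 2 / (2 * t0) + θ * x0 / t0)) by
      rw [Real.exp_add (Real.log ε), Real.exp_log hε]]
  apply Real.exp_le_exp.2
  have e : -θ ^ 2 / (2 * t) + θ * x / t - (-θ ^ 2 / (2 * t0) + θ * x0 / t0)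
      = - a * |θ| ^ 2 + c * θ := by
    rw [sq_abs, ha, hc]; field_simp; ring
  have h3 : c * θ ≤ |c| * |θ| := by rw [← abs_mul]; exact le_abs_self _
  have h4 : -|Real.log ε| ≤ Real.log ε := neg_abs_le _
  have h5 : 0 ≤ |Real.log ε| := abs_nonneg _
  nlinarith [mul_le_mul_of_nonneg_left h2 (abs_nonneg θ), mul_nonneg h5 (sub_nonneg.2 h1)]

/-- passing to the endpoint -/
lemma aux_endpoint (b : ℝ → ℝ) (t0 : ℝ) (ht0 : 0 < t0) (hb : DifferentiableAt ℝ b t0)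
    (ν : Measure ℝ) (h : ∀ t ∈ Ioo 0 t0, 1 ≤ rMu ν t (b t)) : 1 ≤ rMu ν t0 (b t0) := by
  by_cases hfin : rMu ν t0 (b t0) = ⊤
  · rw [hfin]; exact le_top
  have hd : DifferentiableAt ℝ (fun t => b t / t) t0 := hb.div differentiableAt_id ht0.ne'
  obtain ⟨K, hK⟩ := hd.isBigO_sub.bound
  have hbc : ContinuousAt b t0 := hb.continuousAt
  have hT : Tendsto (fun t => rMu ν t (b t)) (𝓝[<] t0) (𝓝 (rMu ν t0 (b t0))) := by
    unfold rMu
    refine tendsto_lintegral_filter_of_dominated_convergence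
      (fun θ => ENNReal.ofReal (Real.exp ((K * t0 ^ 2) ^ 2 / t0) * rTheta θ t0 (b t0)))
      (Eventually.of_forall fun t => (aux_cont t (b t)).measurable.ennreal_ofReal) ?_ ?_ ?_
    · have hev : ∀ᶠ t in 𝓝[<] t0, t0 / 2 < t :=
        nhdsWithin_le_nhds (lt_mem_nhds (by linarith))
      filter_upwards [nhdsWithin_le_nhds hK, hev, self_mem_nhdsWithin] with t hKt htl htt
      refine Eventually.of_forall fun θ => ENNReal.ofReal_le_ofReal ?_
      have htt' : t < t0 := htt
      have ht : 0 < t := by linarith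
      unfold rTheta
      rw [← Real.exp_add]
      apply Real.exp_le_exp.2
      set δ := 1 / t - 1 / t0 with hδ
      have hδe : δ = (t0 - t) / (t * t0) := by rw [hδ]; field_simp
      have hδ1 : t0 - t = δ * (t * t0) := by rw [hδe]; field_simp
      have hδ0 : 0 < δ := by rw [hδe]; apply div_pos <;> [linarith; positivity]
      have hδ2 : δ ≤ 1 / t0 := by
        rw [hδ]
        have : 1 / t < 1 / (t0 / 2) := one_div_lt_one_div_of_lt (by linarith) htl
        have e : 1 / (t0 / 2) = 2 / t0 := by field_simp
        have e2 : 2 / t0 = 1 / t0 + 1 / t0 := by ring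
        linarith
      set c := b t / t - b t0 / t0 with hc
      have hK' : |c| ≤ K * (t0 - t) := by
        have := hKt
        rw [Real.norm_eq_abs, Real.norm_eq_abs, abs_sub_comm t t0, abs_of_pos (sub_pos.2 htt')] at this
        exact this
      have hK0 : 0 ≤ K := by
        have := (abs_nonneg c).trans hK'
        exact nonneg_of_mul_nonneg_left this (sub_pos.2 htt')
      have hcL : |c| ≤ K * t0 ^ 2 * δ := by
        refine hK'.trans ?_
        rw [hδ1]
        have : t * t0 ≤ t0 ^ 2 := by nlinarith
        have := mul_le_mul_of_nonneg_left this (mul_nonneg hK0 hδ0.le)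
        nlinarith
      set L := K * t0 ^ 2 with hL
      have e : -θ ^ 2 / (2 * t) + θ * b t / t - (-θ ^ 2 / (2 * t0) + θ * b t0 / t0)
          = - δ / 2 * |θ| ^ 2 + c * θ := by
        rw [sq_abs, hδ, hc]; field_simp; ring
      have h3 : c * θ ≤ L * δ * |θ| := by
        refine (le_abs_self _).trans ?_
        rw [abs_mul]
        exact mul_le_mul_of_nonneg_right hcL (abs_nonneg _)
      have h4 : L ^ 2 * δ ≤ L ^ 2 / t0 := by
        rw [div_eq_mul_one_div]
        exact mul_le_mul_of_nonneg_left hδ2 (sq_nonneg _)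
      nlinarith [mul_nonneg hδ0.le (sq_nonneg (|θ| - L)), mul_nonneg hδ0.le (sq_nonneg L)]
    · simp_rw [ENNReal.ofReal_mul (Real.exp_pos _).le]
      rw [lintegral_const_mul _ ((aux_cont _ _).measurable.ennreal_ofReal)]
      exact ENNReal.mul_ne_top ENNReal.ofReal_ne_top hfin
    · refine Eventually.of_forall fun θ => ENNReal.tendsto_ofReal ?_
      have : ContinuousAt (fun t => rTheta θ t (b t)) t0 := by
        unfold rTheta
        refine Real.continuous_exp.continuousAt.comp ?_
        refine ContinuousAt.add (ContinuousAt.div ?_ ?_ (by positivity))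
          (ContinuousAt.div ?_ ?_ ht0.ne') <;> fun_prop
      exact this.tendsto.mono_left nhdsWithin_le_nhds
  refine ge_of_tendsto hT ?_
  filter_upwards [Ioo_mem_nhdsLT ht0] with t ht
  exact h t ht

lemma aux_inf (b : ℝ → ℝ) (t0 x0 : ℝ) (ht0 : 0 < t0) (hb : DifferentiableAt ℝ b t0)
    (S : Set (Measure ℝ)) (hp : pVal b t0 x0 (@closure _ vagueTop S) ≠ ⊤) :
    ∃ μstar ∈ feasSet b t0 (@closure _ vagueTop S),
      gInt t0 x0 μstar = pVal b t0 x0 (@closure _ vagueTop S) := by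
  obtain ⟨μ, h1, h2, h3⟩ := aux_seq b t0 x0 _ hp
  set p := pVal b t0 x0 (@closure _ vagueTop S) with hpdef
  set g : ℝ → ℝ := fun θ => rTheta θ t0 x0 with hgdef
  have hg : Continuous g := aux_cont t0 x0
  have hpos : ∀ x, 0 < g x := fun x => aux_pos x t0 x0
  have hp1 : p + 1 ≠ ⊤ := by simp [hp]
  have hint : ∀ k, Integrable g (μ k) := fun k =>
    aux_integrable g hg hpos (μ k) (ne_top_of_le_ne_top hp1 (h2 k))
  have hM : ∀ k, ∫ x, g x ∂(μ k) ≤ (p + 1).toReal := by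
    intro k
    rw [integral_eq_lintegral_of_nonneg_ae (Eventually.of_forall fun x => (hpos x).le)
      hg.aestronglyMeasurable]
    exact ENNReal.toReal_mono hp1 (h2 k)
  obtain ⟨ν, hνc, hν⟩ := aux_compact g hg hpos μ _ hint hM
  have hlint := aux_lint (hyperfilter ℕ : Filter ℕ) g hg hpos μ hint ν hν
  have hle : gInt t0 x0 ν ≤ p := by
    have h4 : ∀ N : ℕ, ∫⁻ x, ENNReal.ofReal (chi N x * g x) ∂ν ≤ p := by
      intro N
      refine le_of_tendsto_of_tendsto' (hlint (fun x => chi N x * g x) ((chi_cont N).mul hg)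
        (chi_supp N).mul_right (fun x => mul_nonneg (chi_nonneg N x) (hpos x).le))
        (h3.mono_left (Nat.cofinite_eq_atTop ▸ hyperfilter_le_cofinite)) fun k => ?_
      refine lintegral_mono fun x => ENNReal.ofReal_le_ofReal ?_
      exact mul_le_of_le_one_left (hpos x).le (chi_le N x)
    have h5 : gInt t0 x0 ν = ∫⁻ x, ⨆ N : ℕ, ENNReal.ofReal (chi N x * g x) ∂ν := by
      unfold gInt
      refine lintegral_congr fun x => le_antisymm ?_ (iSup_le fun N => ?_)
      · obtain ⟨N, hN⟩ := exists_nat_ge |x|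
        refine le_iSup_of_le N ?_
        rw [chi_one N x hN, one_mul]
      · exact ENNReal.ofReal_le_ofReal (mul_le_of_le_one_left (hpos x).le (chi_le N x))
    rw [h5, lintegral_iSup]
    · exact iSup_le h4
    · exact fun N => ((chi_cont N).mul hg).measurable.ennreal_ofReal
    · intro m n hmn x
      exact ENNReal.ofReal_le_ofReal (mul_le_mul_of_nonneg_right (chi_mono x hmn) (hpos x).le)
  have hfeas : ∀ t ∈ Ioo 0 t0, 1 ≤ rMu ν t (b t) := by
    intro t ht
    have key : ∀ ε : ℝ≥0, 0 < ε → 1 ≤ rMu ν t (b t) + ε * (p + 1) := by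
      intro ε hε
      obtain ⟨N, hN⟩ := aux_tail t t0 (b t) x0 ht.1 ht.2 ε hε
      have hrc := aux_cont t (b t)
      have hT := (hlint (fun x => chi N x * rTheta x t (b t)) ((chi_cont N).mul hrc)
        (chi_supp N).mul_right (fun x => mul_nonneg (chi_nonneg N x) (aux_pos _ _ _).le))
      have h6 : 1 ≤ ∫⁻ x, ENNReal.ofReal (chi N x * rTheta x t (b t)) ∂ν + ε * (p + 1) := by
        refine ge_of_tendsto' (hT.add_const _) fun k => ?_
        refine ((h1 k).2 t ⟨ht.1, ht.2.le⟩).trans ?_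
        refine le_trans ?_ (add_le_add_right (mul_le_mul_right (h2 k) (ε : ℝ≥0∞)) _)
        unfold rMu gInt
        rw [← lintegral_const_mul _ hg.measurable.ennreal_ofReal,
          ← lintegral_add_left (f := fun x => ENNReal.ofReal (chi N x * rTheta x t (b t)))
            ((chi_cont N).mul hrc).measurable.ennreal_ofReal]
        refine lintegral_mono fun x => ?_
        rcases le_total |x| N with hx | hx
        · dsimp only
          rw [chi_one N x hx, one_mul]; exact le_self_add
        · refine le_trans ?_ le_add_self
          rw [← ENNReal.ofReal_coe_nnreal, ← ENNReal.ofReal_mul ε.coe_nonneg]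
          exact ENNReal.ofReal_le_ofReal (hN x hx)
      refine h6.trans ?_
      gcongr
      refine lintegral_mono fun x => ENNReal.ofReal_le_ofReal ?_
      exact mul_le_of_le_one_left (aux_pos _ _ _).le (chi_le N x)
    have hT : Tendsto (fun k : ℕ => rMu ν t (b t) + (((k : ℝ≥0) + 1)⁻¹ : ℝ≥0) * (p + 1)) atTop
        (𝓝 (rMu ν t (b t) + ((0 : ℝ≥0) : ℝ≥0∞) * (p + 1))) := by
      refine Tendsto.const_add _ (ENNReal.Tendsto.mul_const (ENNReal.tendsto_coe.2 ?_) (Or.inr hp1))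
      simpa using tendsto_one_div_add_atTop_nhds_zero_nat (𝕜 := ℝ≥0)
    have := ge_of_tendsto' hT fun k => key _ (by positivity)
    simpa using this
  have hmem : ν ∈ feasSet b t0 (@closure _ vagueTop S) := by
    refine ⟨aux_vague (hyperfilter ℕ : Filter ℕ) μ ν hν S fun k => (h1 k).1, fun t ht => ?_⟩
    rcases ht.2.lt_or_eq with h | h
    · exact hfeas t ⟨ht.1, h⟩
    · rw [h]; exact aux_endpoint b t0 ht0 hb ν hfeas
  exact ⟨ν, hmem, le_antisymm hle (iInf₂_le _ hmem)⟩

theorem stmt_16 (b : ℝ → ℝ)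
    (hba : AnalyticOnNhd ℝ b (Set.Ici 0)) (hbconc : ConcaveOn ℝ (Set.Ici 0) b)
    (hb0 : 0 < b 0) (hbderiv : ∃ d : ℝ, HasDerivWithinAt b d (Set.Ici 0) 0)
    (t0 x0 : ℝ) (ht0 : 0 < t0) (hx0 : x0 < b t0)
    (μs : ℕ → Measure ℝ) (hfin : ∀ i, IsFiniteMeasure (μs i))
    (hsupp : ∀ i, μs i (Set.Ici (2 * b 0))ᶜ = 0)
    (C : ℝ≥0) (hC : 0 < C)
    (hCfeas : ∀ t ∈ Set.Ioc 0 t0, 1 ≤ rMu (C • μs 0) t (b t)) :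
    -- existence of optimisers and the bound, for each `n ≥ 1` …
    (∀ n : ℕ, 1 ≤ n →
      (∃ μstar ∈ feasSet b t0 (coneU μs n),
        gInt t0 x0 μstar = pVal b t0 x0 (coneU μs n)) ∧
      pVal b t0 x0 (coneU μs n) ≤ (C : ℝ≥0∞) * gInt t0 x0 (μs 0)) ∧
    -- … and for `n = ∞`
    ((∃ μstar ∈ feasSet b t0 (coneUInf μs),
        gInt t0 x0 μstar = pVal b t0 x0 (coneUInf μs)) ∧
      pVal b t0 x0 (coneUInf μs) ≤ (C : ℝ≥0∞) * gInt t0 x0 (μs 0)) ∧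
    -- monotonicity: each optimiser of the `m`-th program is feasible for the
    -- `n`-th program when `m ≤ n`, and the optimal values decrease
    (∀ m n : ℕ, 1 ≤ m → m ≤ n →
      (∀ μstar ∈ feasSet b t0 (coneU μs m),
        gInt t0 x0 μstar = pVal b t0 x0 (coneU μs m) →
          μstar ∈ feasSet b t0 (coneU μs n)) ∧
      pVal b t0 x0 (coneU μs n) ≤ pVal b t0 x0 (coneU μs m)) := by
  have hfeas : ∀ U : Set (Measure ℝ), C • μs 0 ∈ U →
      pVal b t0 x0 U ≤ (C : ℝ≥0∞) * gInt t0 x0 (μs 0) := by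
    intro U hU
    refine (iInf₂_le (C • μs 0) ⟨hU, hCfeas⟩).trans ?_
    unfold gInt
    rw [lintegral_smul_measure]; rfl
  have hfinite : (C : ℝ≥0∞) * gInt t0 x0 (μs 0) ≠ ⊤ :=
    ENNReal.mul_ne_top ENNReal.coe_ne_top (aux_fin (μs 0) t0 x0 ht0)
  have hInf : C • μs 0 ∈ coneUInf μs :=
    @subset_closure _ vagueTop _ _ (mem_iUnion.2 ⟨1, aux_mem μs C le_rfl⟩)
  refine ⟨fun n hn => ?_, ⟨?_, hfeas _ hInf⟩, fun m n hm hmn => ?_⟩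
  · have h := hfeas _ (aux_mem μs C hn)
    exact ⟨aux_finite b t0 x0 ht0 μs hfin n (ne_top_of_le_ne_top hfinite h), h⟩
  · exact aux_inf b t0 x0 ht0 (hba t0 ht0.le).differentiableAt _
      (ne_top_of_le_ne_top hfinite (hfeas _ hInf))
  · have hsub : feasSet b t0 (coneU μs m) ⊆ feasSet b t0 (coneU μs n) :=
      fun μ hμ => ⟨aux_mono μs hmn hμ.1, hμ.2⟩
    exact ⟨fun μ hμ _ => hsub hμ, biInf_mono hsub⟩
end

section
/- (Error bound for the approximate first passage time distribution.) Let b : [0,∞) → ℝ be continuous with b(0) > 0 and t0 > 0. Let μ̃ be a finite nonnegative Borel measure on [2b(0),∞) and write r̃(t,x) := r_{μ̃}(t,x). Let ζ1 ∈ [0,1), ζ2 > 0, and let G : (0,t0] × ℝ → [0,1] be measurable (G(t,x) plays the role of the conditional crossing probability P(τ ≤ t | W_t = x)) with (1−ζ1)·r̃(t,x) ≤ G(t,x) ≤ (1+ζ2)·r̃(t,x) for all t ∈ (0,t0] and all x < b(t). Define, with Φ the standard normal cumulative distribution function and p_t(x) := (2πt)^{−1/2}·exp(−x²/(2t)), F(t)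 := 1 − Φ(b(t)/√t) + ∫_{(−∞, b(t))} G(t,x)·p_t(x) dx and F̃(t) := 1 − Φ(b(t)/√t) + ∫_{(−∞, b(t))} r̃(t,x)·p_t(x) dx. If F̃(t) ≤ 1 for all t ∈ (0,t0], then sup_{t ∈ (0,t0]} |F(t) − F̃(t)| ≤ max(ζ1, ζ2). -/
open MeasureTheory Set Filter
open scoped ENNReal NNReal Topology

/-- The standard normal cumulative distribution function. -/
noncomputable def stdNormalCDF (y : ℝ) : ℝ :=
  ∫ u in Set.Iio y, (Real.sqrt (2 * Real.pi))⁻¹ * Real.exp (-u ^ 2 / 2)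

/-- The Gaussian transition density `p_t(x) = (2πt)^{-1/2} exp(-x²/(2t))`. -/
noncomputable def gaussDens (t x : ℝ) : ℝ :=
  (Real.sqrt (2 * Real.pi * t))⁻¹ * Real.exp (-x ^ 2 / (2 * t))

theorem aux_cdf_le_one (y : ℝ) : stdNormalCDF y ≤ 1 := by
  have h : ∀ u : ℝ, (Real.sqrt (2 * Real.pi))⁻¹ * Real.exp (-u ^ 2 / 2)
      = ProbabilityTheory.gaussianPDFReal 0 1 u := by
    intro u
    simp [ProbabilityTheory.gaussianPDFReal]
  unfold stdNormalCDF
  simp_rw [h]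
  rw [← ProbabilityTheory.integral_gaussianPDFReal_eq_one 0 (one_ne_zero : (1 : ℝ≥0) ≠ 0)]
  exact setIntegral_le_integral (ProbabilityTheory.integrable_gaussianPDFReal 0 1)
    (ae_of_all _ (fun x => ProbabilityTheory.gaussianPDFReal_nonneg 0 1 x))

theorem aux_dens_integrable (t : ℝ) (ht : 0 < t) : Integrable (gaussDens t) := by
  have h : gaussDens t = ProbabilityTheory.gaussianPDFReal 0 ⟨t, ht.le⟩ := by
    funext x
    simp [gaussDens, ProbabilityTheory.gaussianPDFReal]
    rfl
  rw [h]
  exact ProbabilityTheory.integrable_gaussianPDFReal _ _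

theorem aux_rMu_measurable (μ : Measure ℝ) [SFinite μ] (t : ℝ) : Measurable (rMu μ t) := by
  unfold rMu
  refine Measurable.lintegral_prod_right' (f := fun p : ℝ × ℝ => ENNReal.ofReal (rTheta p.2 t p.1)) ?_
  unfold rTheta
  fun_prop

theorem stmt_19 (b : ℝ → ℝ) (hbcont : ContinuousOn b (Set.Ici 0)) (hb0 : 0 < b 0)
    (t0 : ℝ) (ht0 : 0 < t0)
    (μt : Measure ℝ) [IsFiniteMeasure μt] (hμtsupp : μt (Set.Ici (2 * b 0))ᶜ = 0)
    (ζ1 ζ2 : ℝ) (hζ1 : ζ1 ∈ Set.Ico (0 : ℝ) 1) (hζ2 : 0 < ζ2)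
    (G : ℝ → ℝ → ℝ) (hGmeas : Measurable (Function.uncurry G))
    (hGrange : ∀ t x, G t x ∈ Set.Icc (0 : ℝ) 1)
    (hGlow : ∀ t ∈ Set.Ioc 0 t0, ∀ x < b t,
      ENNReal.ofReal (1 - ζ1) * rMu μt t x ≤ ENNReal.ofReal (G t x))
    (hGhigh : ∀ t ∈ Set.Ioc 0 t0, ∀ x < b t,
      ENNReal.ofReal (G t x) ≤ ENNReal.ofReal (1 + ζ2) * rMu μt t x)
    (F Ftil : ℝ → ℝ)
    (hF : ∀ t ∈ Set.Ioc 0 t0, F t = 1 - stdNormalCDF (b t / Real.sqrt t) +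
      ∫ x in Set.Iio (b t), G t x * gaussDens t x)
    (hFtil : ∀ t ∈ Set.Ioc 0 t0, Ftil t = 1 - stdNormalCDF (b t / Real.sqrt t) +
      ∫ x in Set.Iio (b t), (rMu μt t x).toReal * gaussDens t x)
    (hFtil1 : ∀ t ∈ Set.Ioc 0 t0, Ftil t ≤ 1) :
    ∀ t ∈ Set.Ioc 0 t0, |F t - Ftil t| ≤ max ζ1 ζ2 := by
  intro t ht
  have hζ1' : 0 < 1 - ζ1 := by linarith [hζ1.2]
  have hp0 : ∀ x, 0 ≤ gaussDens t x := fun x => by unfold gaussDens; positivity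
  have hpi := aux_dens_integrable t ht.1
  have hfin : ∀ x < b t, rMu μt t x ≠ ∞ := by
    intro x hx htop
    have h := hGlow t ht x hx
    rw [htop, ENNReal.mul_top (by simpa using hζ1')] at h
    exact ENNReal.ofReal_ne_top (top_le_iff.mp h)
  have hlow : ∀ x < b t, (1 - ζ1) * (rMu μt t x).toReal ≤ G t x := by
    intro x hx
    have h := ENNReal.toReal_mono ENNReal.ofReal_ne_top (hGlow t ht x hx)
    rwa [ENNReal.toReal_mul, ENNReal.toReal_ofReal hζ1'.le,
      ENNReal.toReal_ofReal (hGrange t x).1] at h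
  have hhigh : ∀ x < b t, G t x ≤ (1 + ζ2) * (rMu μt t x).toReal := by
    intro x hx
    have h := ENNReal.toReal_mono (ENNReal.mul_ne_top ENNReal.ofReal_ne_top (hfin x hx))
      (hGhigh t ht x hx)
    rwa [ENNReal.toReal_mul, ENNReal.toReal_ofReal (by linarith : 0 ≤ 1 + ζ2),
      ENNReal.toReal_ofReal (hGrange t x).1] at h
  have hGm : Measurable (G t) := hGmeas.comp measurable_prodMk_left
  have hGi : IntegrableOn (fun x => G t x * gaussDens t x) (Set.Iio (b t)) := by
    refine Integrable.mono' hpi.integrableOn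
      (hGm.aestronglyMeasurable.mul hpi.integrableOn.aestronglyMeasurable) (ae_of_all _ fun x => ?_)
    rw [Real.norm_of_nonneg (mul_nonneg (hGrange t x).1 (hp0 x))]
    exact mul_le_of_le_one_left (hp0 x) (hGrange t x).2
  have hri : IntegrableOn (fun x => (rMu μt t x).toReal * gaussDens t x) (Set.Iio (b t)) := by
    refine Integrable.mono' (hGi.const_mul (1 - ζ1)⁻¹)
      ((aux_rMu_measurable μt t).ennreal_toReal.aestronglyMeasurable.mul
        hpi.integrableOn.aestronglyMeasurable) ?_
    refine (ae_restrict_iff' measurableSet_Iio).2 (ae_of_all _ fun x hx => ?_)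
    rw [Real.norm_of_nonneg (mul_nonneg ENNReal.toReal_nonneg (hp0 x)), ← mul_assoc]
    refine mul_le_mul_of_nonneg_right ?_ (hp0 x)
    rw [← div_eq_inv_mul, le_div_iff₀ hζ1', mul_comm]
    exact hlow x hx
  have h1 : (1 - ζ1) * (∫ x in Set.Iio (b t), (rMu μt t x).toReal * gaussDens t x)
      ≤ ∫ x in Set.Iio (b t), G t x * gaussDens t x := by
    rw [← integral_const_mul]
    refine setIntegral_mono_on (hri.const_mul _) hGi measurableSet_Iio fun x hx => ?_
    rw [← mul_assoc]
    exact mul_le_mul_of_nonneg_right (hlow x hx) (hp0 x)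
  have h2 : (∫ x in Set.Iio (b t), G t x * gaussDens t x)
      ≤ (1 + ζ2) * (∫ x in Set.Iio (b t), (rMu μt t x).toReal * gaussDens t x) := by
    rw [← integral_const_mul]
    refine setIntegral_mono_on hGi (hri.const_mul _) measurableSet_Iio fun x hx => ?_
    rw [← mul_assoc]
    exact mul_le_mul_of_nonneg_right (hhigh x hx) (hp0 x)
  have h3 := hFtil1 t ht
  have h4 := aux_cdf_le_one (b t / Real.sqrt t)
  rw [hFtil t ht] at h3 ⊢
  rw [hF t ht]
  generalize (∫ x in Set.Iio (b t), (rMu μt t x).toReal * gaussDens t x) = R at *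
  generalize (∫ x in Set.Iio (b t), G t x * gaussDens t x) = S at *
  have hR : R ≤ 1 := by linarith
  have h5 : ζ1 * R ≤ ζ1 := mul_le_of_le_one_right hζ1.1 hR
  have h6 : ζ2 * R ≤ ζ2 := mul_le_of_le_one_right hζ2.le hR
  rw [abs_le]
  constructor
  · linarith [le_max_left ζ1 ζ2]
  · linarith [le_max_right ζ1 ζ2]
end
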